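/- Let C > 0 and ε₀ > 0 be real constants. Let ρ : ℝ³ × ℝ → ℝ be a smooth function for which there is a compact set K ⊆ ℝ³ with supp ρ(·,t) ⊆ K for every t. Define the retarded scalar potential V(x,t) = (1/(4πε₀)) ∫_{ℝ³} ρ(y, t − |x−y|/C)/|x−y| dy. Then V is twice differentiable and satisfies the inhomogeneous wave equation Δ_x V(x,t) − (1/C²) ∂²V/∂t²(x,t) = −ρ(x,t)/ε₀ for all (x,t) ∈ ℝ³ × ℝ. -/

import Mathlib

noncomputable section

open MeasureTheory Real

abbrev V3 := Fin 3 → ℝ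

def dot3 (a b : V3) : ℝ := ∑ i, a i * b i

def norm3 (a : V3) : ℝ := Real.sqrt (dot3 a a)

def cross3 (a b : V3) : V3 :=
  ![a 1 * b 2 - a 2 * b 1, a 2 * b 0 - a 0 * b 2, a 0 * b 1 - a 1 * b 0]

/-- Spatial partial derivative in direction `i` of a time-dependent field. -/
def pdS {F : Type*} [NormedAddCommGroup F] [NormedSpace ℝ F]
    (i : Fin 3) (f : V3 × ℝ → F) (p : V3 × ℝ) : F :=
  fderiv ℝ (fun y => f (y, p.2)) p.1 (Pi.single i 1)

/-- Partial time derivative of a time-dependent field. -/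
def pdT {F : Type*} [NormedAddCommGroup F] [NormedSpace ℝ F]
    (f : V3 × ℝ → F) (p : V3 × ℝ) : F :=
  deriv (fun s => f (p.1, s)) p.2

/-- Spatial gradient. -/
def grad (f : V3 × ℝ → ℝ) (p : V3 × ℝ) : V3 := fun i => pdS i f p

/-- Spatial divergence. -/
def divg (A : V3 × ℝ → V3) (p : V3 × ℝ) : ℝ := ∑ i, pdS i (fun q => A q i) p

/-- Spatial curl. -/
def curl (A : V3 × ℝ → V3) (p : V3 × ℝ) : V3 :=
  ![pdS 1 (fun q => A q 2) p - pdS 2 (fun q => A q 1) p,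
    pdS 2 (fun q => A q 0) p - pdS 0 (fun q => A q 2) p,
    pdS 0 (fun q => A q 1) p - pdS 1 (fun q => A q 0) p]

/-- Spatial Laplacian (componentwise for vector-valued fields). -/
def lap {F : Type*} [NormedAddCommGroup F] [NormedSpace ℝ F]
    (f : V3 × ℝ → F) (p : V3 × ℝ) : F :=
  ∑ i, pdS i (pdS i f) p

/-- Spatial directional derivative `(a·∇)f`. -/
def dirS {F : Type*} [NormedAddCommGroup F] [NormedSpace ℝ F]
    (a : V3) (f : V3 × ℝ → F) (p : V3 × ℝ) : F :=
  fderiv ℝ (fun y => f (y, p.2)) p.1 a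


/-- The retarded scalar potential `V(x,t) = (1/(4πε₀)) ∫ ρ(y, t − |x−y|/C)/|x−y| dy`. -/
def Vret (C ε₀ : ℝ) (ρ : V3 × ℝ → ℝ) (p : V3 × ℝ) : ℝ :=
  (1 / (4 * π * ε₀)) * ∫ y : V3, (norm3 (p.1 - y))⁻¹ * ρ (y, p.2 - norm3 (p.1 - y) / C)

/-- Regularised Euclidean length. -/
def sreg (δ : ℝ) (z : V3) : ℝ := Real.sqrt (dot3 z z + δ ^ 2)

lemma dot3_self_nonneg (z : V3) : 0 ≤ dot3 z z :=
  Finset.sum_nonneg fun _ _ => mul_self_nonneg _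

lemma sreg_zero (z : V3) : sreg 0 z = norm3 z := by simp [sreg, norm3]

lemma sreg_nonneg (δ : ℝ) (z : V3) : 0 ≤ sreg δ z := Real.sqrt_nonneg _

lemma sreg_sq (δ : ℝ) (z : V3) : sreg δ z ^ 2 = dot3 z z + δ ^ 2 :=
  Real.sq_sqrt (add_nonneg (dot3_self_nonneg z) (sq_nonneg δ))

lemma sreg_pos {δ : ℝ} (hδ : 0 < δ) (z : V3) : 0 < sreg δ z :=
  Real.sqrt_pos.2 (by have := dot3_self_nonneg z; positivity)

lemma norm3_le_sreg (δ : ℝ) (z : V3) : norm3 z ≤ sreg δ z :=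
  Real.sqrt_le_sqrt (by nlinarith [sq_nonneg δ])

lemma norm_le_norm3 (z : V3) : ‖z‖ ≤ norm3 z := by
  refine (pi_norm_le_iff_of_nonneg (Real.sqrt_nonneg _)).2 fun i => ?_
  rw [Real.norm_eq_abs]
  refine Real.abs_le_sqrt ?_
  rw [sq]
  exact Finset.single_le_sum (f := fun i => z i * z i) (fun i _ => mul_self_nonneg _)
    (Finset.mem_univ i)

lemma norm_le_sreg (δ : ℝ) (z : V3) : ‖z‖ ≤ sreg δ z :=
  (norm_le_norm3 z).trans (norm3_le_sreg δ z)

lemma le_sreg {δ : ℝ} (z : V3) : δ ≤ sreg δ z := by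
  refine (le_abs_self δ).trans (Real.abs_le_sqrt ?_)
  nlinarith [dot3_self_nonneg z]

lemma continuous_dot3 : Continuous fun z : V3 => dot3 z z := by
  unfold dot3; fun_prop

lemma continuous_sreg2 : Continuous fun q : ℝ × V3 => sreg q.1 q.2 := by
  unfold sreg dot3; fun_prop

lemma continuous_sreg (δ : ℝ) : Continuous (sreg δ) := by
  unfold sreg dot3; fun_prop

lemma continuous_norm3 : Continuous norm3 := by
  unfold norm3 dot3; fun_prop

lemma sreg_smul {δ : ℝ} (hδ : 0 < δ) (w : V3) : sreg δ (δ • w) = δ * sreg 1 w := by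
  unfold sreg
  have : dot3 (δ • w) (δ • w) + δ ^ 2 = δ ^ 2 * (dot3 w w + 1 ^ 2) := by
    simp only [dot3, Fin.sum_univ_three, Pi.smul_apply, smul_eq_mul]; ring
  rw [this, Real.sqrt_mul (sq_nonneg δ), Real.sqrt_sq hδ.le]

lemma integrableOn_norm_pow_inv {m : ℕ} (hm : m ≤ 2) (R : ℝ) :
    IntegrableOn (fun z : V3 => (‖z‖ ^ m)⁻¹) (Metric.closedBall 0 R) := by
  refine IntegrableOn.mono_set (t := Metric.ball 0 (R + 1)) ?_
    (Metric.closedBall_subset_ball (by linarith))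
  rw [integrableOn_fun_norm_addHaar volume (f := fun y : ℝ => (y ^ m)⁻¹)]
  have h1 : IntegrableOn (fun y : ℝ => y ^ (2 - m)) (Set.Ioo 0 (R + 1)) :=
    (Continuous.integrableOn_Icc (by fun_prop)).mono_set Set.Ioo_subset_Icc_self
  refine h1.congr_fun ?_ measurableSet_Ioo
  intro y hy
  have hy0 : y ≠ 0 := hy.1.ne'
  simp only [Module.finrank_fintype_fun_eq_card, Fintype.card_fin, smul_eq_mul]
  rw [pow_sub₀ _ hy0 hm]

section bounds

variable {F : Type} [NormedAddCommGroup F] [NormedSpace ℝ F]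

lemma exists_bound (C : ℝ) {K : Set V3} (hK : IsCompact K) {g : V3 × ℝ → F}
    (hg : Continuous g) (hs : ∀ y t, y ∉ K → g (y, t) = 0) (p₀ : V3 × ℝ) :
    ∃ M R : ℝ, 0 ≤ M ∧ ∀ δ ∈ Set.Icc (0 : ℝ) 1, ∀ p ∈ Metric.closedBall p₀ 1, ∀ z : V3,
      ‖g (p - (z, sreg δ z / C))‖ ≤ (Metric.closedBall (0 : V3) R).indicator (fun _ => M) z := by
  obtain ⟨B, hB⟩ := hK.isBounded.exists_norm_le
  set R := ‖p₀‖ + 1 + B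
  have hc : Continuous fun q : ℝ × (V3 × ℝ) × V3 => g (q.2.1 - (q.2.2, sreg q.1 q.2.2 / C)) := by
    have := continuous_sreg2.comp
      (f := fun q : ℝ × (V3 × ℝ) × V3 => (q.1, q.2.2)) (by fun_prop)
    simp only [Function.comp_def] at this
    fun_prop
  have hcomp : IsCompact (Set.Icc (0 : ℝ) 1 ×ˢ Metric.closedBall p₀ 1 ×ˢ
      Metric.closedBall (0 : V3) R) :=
    isCompact_Icc.prod ((isCompact_closedBall _ _).prod (isCompact_closedBall _ _))
  obtain ⟨M, hM⟩ := hcomp.exists_bound_of_continuousOn hc.continuousOn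
  refine ⟨max M 0, R, le_max_right _ _, fun δ hδ p hp z => ?_⟩
  by_cases hz : z ∈ Metric.closedBall (0 : V3) R
  · rw [Set.indicator_of_mem hz]
    exact (hM (δ, p, z) ⟨hδ, hp, hz⟩).trans (le_max_left _ _)
  · rw [Set.indicator_of_notMem hz]
    have : g (p - (z, sreg δ z / C)) = 0 := by
      refine hs _ _ fun hmem => hz ?_
      have h1 := hB _ hmem
      have h2 : ‖z‖ ≤ ‖p.1‖ + ‖p.1 - z‖ := by
        have := norm_sub_le p.1 (p.1 - z)
        simpa using this
      have h3 : ‖p.1‖ ≤ ‖p‖ := norm_fst_le p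
      have h4 : ‖p‖ ≤ ‖p₀‖ + 1 := by
        have := norm_sub_norm_le p p₀
        rw [Metric.mem_closedBall, dist_eq_norm] at hp
        linarith
      rw [mem_closedBall_zero_iff]
      have h5 : ‖p.1 - z‖ ≤ B := h1
      linarith
    simp [this]

lemma ae_ne_zero : ∀ᵐ z : V3, z ≠ 0 := by
  simp [ae_iff]

lemma integrable_bound {m : ℕ} (hm : m ≤ 2) (R M : ℝ) :
    Integrable (fun z : V3 => (‖z‖ ^ m)⁻¹ *
      (Metric.closedBall (0 : V3) R).indicator (fun _ => M) z) := by
  have := (integrable_indicator_iff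
    (Metric.isClosed_closedBall (x := (0 : V3)) (ε := R)).measurableSet).2
    (Integrable.mul_const (integrableOn_norm_pow_inv hm R) M)
  refine this.congr (Filter.Eventually.of_forall fun z => ?_)
  by_cases hz : z ∈ Metric.closedBall (0 : V3) R
  · simp only [Set.indicator_of_mem hz]
  · simp only [Set.indicator_of_notMem hz, mul_zero]

lemma norm3_inv_le (z : V3) : (norm3 z)⁻¹ ≤ (‖z‖ ^ 1)⁻¹ := by
  rw [pow_one]
  by_cases hz : z = 0
  · subst hz; simp [norm3, dot3]
  · exact inv_anti₀ (norm_pos_iff.2 hz) (norm_le_norm3 z)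

/-- The retarded integral operator. -/
def Wop (C : ℝ) (g : V3 × ℝ → F) (p : V3 × ℝ) : F :=
  ∫ z : V3, (norm3 z)⁻¹ • g (p - (z, sreg 0 z / C))

lemma integrand_cont (C : ℝ) {g : V3 × ℝ → F} (hg : Continuous g) (δ : ℝ) (p : V3 × ℝ) :
    Continuous fun z : V3 => g (p - (z, sreg δ z / C)) := by
  have := continuous_sreg δ
  fun_prop

lemma integrand_meas (C : ℝ) {g : V3 × ℝ → F} (hg : Continuous g) (p : V3 × ℝ) :
    AEStronglyMeasurable (fun z : V3 => (norm3 z)⁻¹ • g (p - (z, sreg 0 z / C))) volume :=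
  AEStronglyMeasurable.smul
    (continuous_norm3.measurable.inv).aestronglyMeasurable
    (integrand_cont C hg 0 p).aestronglyMeasurable

lemma Wop_bound (C : ℝ) {K : Set V3} (hK : IsCompact K) {g : V3 × ℝ → F}
    (hg : Continuous g) (hs : ∀ y t, y ∉ K → g (y, t) = 0) (p₀ : V3 × ℝ) :
    ∃ M R : ℝ, ∀ p ∈ Metric.closedBall p₀ 1, ∀ z : V3,
      ‖(norm3 z)⁻¹ • g (p - (z, sreg 0 z / C))‖ ≤
        (‖z‖ ^ 1)⁻¹ * (Metric.closedBall (0 : V3) R).indicator (fun _ => M) z := by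
  obtain ⟨M, R, hM, h⟩ := exists_bound C hK hg hs p₀
  refine ⟨M, R, fun p hp z => ?_⟩
  rw [norm_smul, Real.norm_of_nonneg (inv_nonneg.2 (show 0 ≤ norm3 z from Real.sqrt_nonneg _))]
  exact mul_le_mul (norm3_inv_le z) (h 0 (by simp) p hp z) (norm_nonneg _) (by positivity)

lemma integrand_integrable (C : ℝ) {K : Set V3} (hK : IsCompact K) {g : V3 × ℝ → F}
    (hg : Continuous g) (hs : ∀ y t, y ∉ K → g (y, t) = 0) (p : V3 × ℝ) :
    Integrable (fun z : V3 => (norm3 z)⁻¹ • g (p - (z, sreg 0 z / C))) := by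
  obtain ⟨M, R, h⟩ := Wop_bound C hK hg hs p
  exact (integrable_bound (by norm_num) R M).mono' (integrand_meas C hg p)
    (Filter.Eventually.of_forall fun z => h p (by simp) z)

lemma fderiv_supp {K : Set V3} (hK : IsCompact K) {g : V3 × ℝ → F}
    (hs : ∀ y t, y ∉ K → g (y, t) = 0) : ∀ y t, y ∉ K → fderiv ℝ g (y, t) = 0 := by
  intro y t hy
  have : g =ᶠ[nhds (y, t)] fun _ => 0 := by
    have hopen : IsOpen {q : V3 × ℝ | q.1 ∉ K} := hK.isClosed.isOpen_compl.preimage continuous_fst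
    filter_upwards [hopen.mem_nhds (show (y, t) ∈ {q : V3 × ℝ | q.1 ∉ K} from hy)] with q hq
    exact hs q.1 q.2 hq
  rw [this.fderiv_eq]; simp

lemma Wop_hasFDerivAt (C : ℝ) {K : Set V3} (hK : IsCompact K) {g : V3 × ℝ → F}
    (hg : ContDiff ℝ 1 g) (hs : ∀ y t, y ∉ K → g (y, t) = 0) (p : V3 × ℝ) :
    HasFDerivAt (Wop C g) (Wop C (fderiv ℝ g) p) p := by
  have hg' : Continuous (fderiv ℝ g) := hg.continuous_fderiv (by norm_num)
  obtain ⟨M, R, h⟩ := Wop_bound C hK hg' (fderiv_supp hK hs) p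
  refine hasFDerivAt_integral_of_dominated_of_fderiv_le (s := Metric.closedBall p 1)
    (bound := fun z => (‖z‖ ^ 1)⁻¹ * (Metric.closedBall (0 : V3) R).indicator (fun _ => M) z)
    (Metric.closedBall_mem_nhds p one_pos)
    (Filter.Eventually.of_forall fun q => integrand_meas C hg.continuous q)
    (integrand_integrable C hK hg.continuous hs p) (integrand_meas C hg' p)
    (Filter.Eventually.of_forall fun z q hq => h q hq z)
    (integrable_bound (by norm_num) R M)
    (Filter.Eventually.of_forall fun z q hq => ?_)
  have h1 : HasFDerivAt g (fderiv ℝ g (q - (z, sreg 0 z / C))) (q - (z, sreg 0 z / C)) :=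
    (hg.differentiable (by norm_num) _).hasFDerivAt
  have h2 := h1.comp q ((hasFDerivAt_id q).sub_const (z, sreg 0 z / C))
  exact (h2.const_smul (norm3 z)⁻¹)

lemma Wop_fderiv_apply (C : ℝ) {K : Set V3} (hK : IsCompact K) {g : V3 × ℝ → F}
    [CompleteSpace F]
    (hg : ContDiff ℝ 1 g) (hs : ∀ y t, y ∉ K → g (y, t) = 0) (p v : V3 × ℝ) :
    Wop C (fderiv ℝ g) p v = Wop C (fun q => fderiv ℝ g q v) p := by
  unfold Wop
  rw [ContinuousLinearMap.integral_apply (integrand_integrable C hK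
    (hg.continuous_fderiv (by norm_num)) (fderiv_supp hK hs) p)]
  rfl

end bounds

lemma Wop_contDiff (C : ℝ) {K : Set V3} (hK : IsCompact K) (n : ℕ) :
    ∀ (F : Type) [NormedAddCommGroup F] [NormedSpace ℝ F] (g : V3 × ℝ → F)
    (_ : ContDiff ℝ (⊤ : ℕ∞) g) (_ : ∀ y t, y ∉ K → g (y, t) = 0),
    ContDiff ℝ n (Wop C g) := by
  induction n with
  | zero =>
    intro F _ _ g hg hs
    refine contDiff_zero.2 (continuous_iff_continuousAt.2 fun p => ?_)
    exact (Wop_hasFDerivAt C hK (hg.of_le (by exact_mod_cast le_top)) hs p).continuousAt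
  | succ n ih =>
    intro F _ _ g hg hs
    have hg1 : ContDiff ℝ 1 g := hg.of_le (by exact_mod_cast le_top)
    have hd := Wop_hasFDerivAt C hK hg1 hs
    rw [show ((n + 1 : ℕ) : WithTop ℕ∞) = (n : WithTop ℕ∞) + 1 by push_cast; rfl,
      contDiff_succ_iff_fderiv]
    refine ⟨fun p => (hd p).differentiableAt, by simp, ?_⟩
    rw [show fderiv ℝ (Wop C g) = Wop C (fderiv ℝ g) from funext fun p => (hd p).fderiv]
    exact ih _ _ (hg.fderiv_right (by exact_mod_cast le_top)) (fderiv_supp hK hs)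

open Filter Topology in
lemma tendsto_kernel (C : ℝ) {K : Set V3} (hK : IsCompact K) {g : V3 × ℝ → ℝ}
    (hg : Continuous g) (hs : ∀ y t, y ∉ K → g (y, t) = 0) (p : V3 × ℝ)
    {m : ℕ} (hm : m ≤ 2) (k : ℝ → V3 → ℝ) (k0 : V3 → ℝ)
    (hk : ∀ δ, Measurable (k δ))
    (hb : ∀ δ, 0 < δ → ∀ z, z ≠ 0 → |k δ z| ≤ (‖z‖ ^ m)⁻¹)
    (hl : ∀ z, z ≠ 0 → Tendsto (fun δ => k δ z) (𝓝[>] 0) (𝓝 (k0 z))) :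
    Tendsto (fun δ => ∫ z : V3, k δ z * g (p - (z, sreg δ z / C))) (𝓝[>] 0)
      (𝓝 (∫ z : V3, k0 z * g (p - (z, sreg 0 z / C)))) := by
  obtain ⟨M, R, hM, h⟩ := exists_bound C hK hg hs p
  refine tendsto_integral_filter_of_dominated_convergence
    (fun z => (‖z‖ ^ m)⁻¹ * (Metric.closedBall (0 : V3) R).indicator (fun _ => M) z)
    ?_ ?_ (integrable_bound hm R M) ?_
  · exact Eventually.of_forall fun δ => (hk δ).aestronglyMeasurable.mul
      (integrand_cont C hg δ p).aestronglyMeasurable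
  · filter_upwards [Ioc_mem_nhdsGT (zero_lt_one' ℝ)] with δ hδ
    filter_upwards [ae_ne_zero] with z hz
    rw [norm_mul]
    exact mul_le_mul (hb δ hδ.1 z hz) (h δ ⟨hδ.1.le, hδ.2⟩ p (by simp) z) (norm_nonneg _)
      (by positivity)
  · filter_upwards [ae_ne_zero] with z hz
    refine (hl z hz).mul ?_
    have hc : Continuous fun δ : ℝ => g (p - (z, sreg δ z / C)) := by
      have : Continuous fun δ : ℝ => sreg δ z := by unfold sreg; fun_prop
      fun_prop
    exact (hc.tendsto 0).mono_left nhdsWithin_le_nhds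

lemma norm3_pos {z : V3} (hz : z ≠ 0) : 0 < norm3 z :=
  (norm_pos_iff.2 hz).trans_le (norm_le_norm3 z)

open Filter Topology in
lemma tendsto_sreg (z : V3) : Tendsto (fun δ => sreg δ z) (𝓝[>] 0) (𝓝 (norm3 z)) := by
  have : Continuous fun δ : ℝ => sreg δ z := by unfold sreg; fun_prop
  rw [← sreg_zero]
  exact (this.tendsto 0).mono_left nhdsWithin_le_nhds

open Filter Topology in
lemma hasDerivAt_aux (y : ℝ) : HasDerivAt (fun y : ℝ => y ^ 3 / Real.sqrt (y ^ 2 + 1) ^ 3)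
    (y ^ 2 * (3 / Real.sqrt (y ^ 2 + 1) ^ 5)) y := by
  have hpos : 0 < y ^ 2 + 1 := by positivity
  have hs : 0 < Real.sqrt (y ^ 2 + 1) := Real.sqrt_pos.2 hpos
  have hsq : Real.sqrt (y ^ 2 + 1) ^ 2 = y ^ 2 + 1 := Real.sq_sqrt hpos.le
  have h1 : HasDerivAt (fun y : ℝ => Real.sqrt (y ^ 2 + 1))
      ((2 * y) / (2 * Real.sqrt (y ^ 2 + 1))) y := by
    have := ((hasDerivAt_pow 2 y).add_const (1 : ℝ)).sqrt hpos.ne'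
    simpa using this
  have h2 := (hasDerivAt_pow 3 y).div (h1.pow 3) (pow_ne_zero 3 hs.ne')
  convert! h2 using 1
  push_cast
  simp only [Pi.pow_apply]
  generalize Real.sqrt (y ^ 2 + 1) = s at *
  field_simp
  rw [hsq]; ring

open Filter Topology in
lemma tendsto_aux : Tendsto (fun y : ℝ => y ^ 3 / Real.sqrt (y ^ 2 + 1) ^ 3) atTop (𝓝 1) := by
  have h0 : Tendsto (fun y : ℝ => (Real.sqrt (1 + (y⁻¹) ^ 2) ^ 3)⁻¹) atTop (𝓝 1) := by
    have hc : Continuous fun u : ℝ => (Real.sqrt (1 + u ^ 2) ^ 3)⁻¹ := by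
      refine Continuous.inv₀ (by fun_prop) fun u => ?_
      have : 0 < Real.sqrt (1 + u ^ 2) := Real.sqrt_pos.2 (by positivity)
      positivity
    have := (hc.tendsto 0).comp tendsto_inv_atTop_zero
    simpa [Function.comp_def] using this
  refine h0.congr' ?_
  filter_upwards [eventually_gt_atTop 0] with y hy
  have : Real.sqrt (y ^ 2 + 1) = y * Real.sqrt (1 + (y⁻¹) ^ 2) := by
    rw [show y ^ 2 + 1 = y ^ 2 * (1 + (y⁻¹) ^ 2) by field_simp,
      Real.sqrt_mul (sq_nonneg y), Real.sqrt_sq hy.le]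
  rw [this]
  have : 0 < Real.sqrt (1 + (y⁻¹) ^ 2) := Real.sqrt_pos.2 (by positivity)
  field_simp

lemma integral_const : ∫ w : V3, 3 / sreg 1 w ^ 5 = 4 * π := by
  have h1 : ∫ x : EuclideanSpace ℝ (Fin 3), (fun y : ℝ => 3 / Real.sqrt (y ^ 2 + 1) ^ 5) ‖x‖
      = 4 * π := by
    rw [integral_fun_norm_addHaar volume (fun y : ℝ => 3 / Real.sqrt (y ^ 2 + 1) ^ 5)]
    have h2 : ∫ y in Set.Ioi (0 : ℝ), y ^ 2 * (3 / Real.sqrt (y ^ 2 + 1) ^ 5) = 1 - 0 := by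
      have := integral_Ioi_of_hasDerivAt_of_nonneg' (a := 0) (fun y _ => hasDerivAt_aux y)
        (fun y _ => by positivity) tendsto_aux
      simpa using this
    simp only [finrank_euclideanSpace, Fintype.card_fin, smul_eq_mul, Nat.add_one_sub_one]
    rw [h2, Measure.real, EuclideanSpace.volume_ball_fin_three]
    rw [ENNReal.toReal_mul, ENNReal.toReal_ofReal (by positivity)]
    simp
    ring
  rw [← h1, ← (PiLp.volume_preserving_toLp (Fin 3)).integral_comp
    (MeasurableEquiv.toLp 2 _).measurableEmbedding]
  congr 1
  ext w
  simp only [sreg, EuclideanSpace.norm_eq, dot3, Real.norm_eq_abs, sq_abs]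
  rw [Real.sq_sqrt (by positivity)]
  simp [sq]

lemma integrable_const5 : Integrable (fun w : V3 => 3 / sreg 1 w ^ 5) := by
  by_contra h
  have := integral_undef h
  rw [integral_const] at this
  have := Real.pi_pos
  linarith

open Filter Topology in
lemma tendsto_delta (C : ℝ) {K : Set V3} (hK : IsCompact K) {g : V3 × ℝ → ℝ}
    (hg : Continuous g) (hs : ∀ y t, y ∉ K → g (y, t) = 0) (p : V3 × ℝ) :
    Tendsto (fun δ => ∫ z : V3, (3 * δ ^ 2 / sreg δ z ^ 5) * g (p - (z, sreg δ z / C))) (𝓝[>] 0)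
      (𝓝 (4 * π * g p)) := by
  obtain ⟨M, R, hM, h⟩ := exists_bound C hK hg hs p
  have key : Tendsto (fun δ => ∫ w : V3, (3 / sreg 1 w ^ 5) *
      g (p - (δ • w, δ * sreg 1 w / C))) (𝓝[>] 0)
      (𝓝 (∫ w : V3, (3 / sreg 1 w ^ 5) * g p)) := by
    refine tendsto_integral_filter_of_dominated_convergence
      (fun w => 3 / sreg 1 w ^ 5 * M) ?_ ?_ (integrable_const5.mul_const M) ?_
    · refine Eventually.of_forall fun δ => integrable_const5.aestronglyMeasurable.mul ?_
      refine Continuous.aestronglyMeasurable ?_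
      have := continuous_sreg 1
      fun_prop
    · filter_upwards [Ioc_mem_nhdsGT (zero_lt_one' ℝ)] with δ hδ
      refine Eventually.of_forall fun w => ?_
      have hp := sreg_pos one_pos w
      rw [norm_mul, Real.norm_of_nonneg (by positivity)]
      refine mul_le_mul_of_nonneg_left ?_ (by positivity)
      rw [← sreg_smul hδ.1]
      refine (h δ ⟨hδ.1.le, hδ.2⟩ p (by simp) (δ • w)).trans ?_
      exact Set.indicator_le_self' (fun _ _ => hM) _
    · refine Eventually.of_forall fun w => ?_
      have hc : Continuous fun δ : ℝ => g (p - (δ • w, δ * sreg 1 w / C)) := by fun_prop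
      have h0 := (hc.tendsto 0).mono_left (nhdsWithin_le_nhds (s := Set.Ioi 0))
      have h1 : p - ((0 : ℝ) • w, 0 * sreg 1 w / C) = p := by
        ext <;> simp
      rw [h1] at h0
      exact h0.const_mul _
  rw [integral_mul_const, integral_const] at key
  refine key.congr' ?_
  filter_upwards [self_mem_nhdsWithin] with δ hδ
  have hδ : 0 < δ := hδ
  have := Measure.integral_comp_smul_of_nonneg volume
    (fun z : V3 => (3 * δ ^ 2 / sreg δ z ^ 5) * g (p - (z, sreg δ z / C))) δ (hR := hδ.le)
  simp only [Module.finrank_fintype_fun_eq_card, Fintype.card_fin, smul_eq_mul,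
    sreg_smul hδ] at this
  have e : ∫ z : V3, (3 * δ ^ 2 / sreg δ z ^ 5) * g (p - (z, sreg δ z / C)) =
    δ ^ 3 * ∫ (x : V3), 3 * δ ^ 2 / (δ * sreg 1 x) ^ 5 * g (p - (δ • x, δ * sreg 1 x / C)) := by
    rw [this]; field_simp
  rw [e, ← integral_const_mul]
  congr 1
  ext w
  have hp := sreg_pos one_pos w
  field_simp

lemma hasLineDerivAt_sreg {δ : ℝ} (hδ : 0 < δ) (z : V3) (i : Fin 3) :
    HasLineDerivAt ℝ (sreg δ) (z i / sreg δ z) z (Pi.single i 1) := by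
  unfold HasLineDerivAt
  have e : ∀ t : ℝ, sreg δ (z + t • Pi.single i 1) =
      Real.sqrt (sreg δ z ^ 2 + 2 * t * z i + t ^ 2) := by
    intro t
    rw [sreg_sq]
    unfold sreg
    congr 1
    fin_cases i <;> simp [dot3, Fin.sum_univ_three, Pi.single_apply] <;> ring
  simp only [e]
  have hs := sreg_pos hδ z
  have h1 : HasDerivAt (fun t : ℝ => sreg δ z ^ 2 + 2 * t * z i + t ^ 2) (2 * z i) 0 := by
    have := ((((hasDerivAt_id (0 : ℝ)).const_mul 2).mul_const (z i)).const_add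
      (sreg δ z ^ 2)).add (hasDerivAt_pow 2 (0 : ℝ))
    convert! this using 1
    simp
  have h2 := h1.sqrt (by simp [hs.ne'])
  convert! h2 using 1
  simp only [mul_zero, zero_mul, add_zero, ne_eq, OfNat.ofNat_ne_zero, not_false_eq_true, zero_pow]
  rw [Real.sqrt_sq hs.le]
  field_simp

lemma hasLineDerivAt_ret {δ : ℝ} (hδ : 0 < δ) (C : ℝ) {g : V3 × ℝ → ℝ} (hg : ContDiff ℝ 1 g)
    (p : V3 × ℝ) (z : V3) (i : Fin 3) :
    HasLineDerivAt ℝ (fun z => g (p - (z, sreg δ z / C)))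
      (-fderiv ℝ g (p - (z, sreg δ z / C)) (Pi.single i 1, 0)
        - z i / (sreg δ z * C) * fderiv ℝ g (p - (z, sreg δ z / C)) (0, 1)) z (Pi.single i 1) := by
  have hs := hasLineDerivAt_sreg hδ z i
  unfold HasLineDerivAt at hs ⊢
  have hz : HasDerivAt (fun t : ℝ => z + t • (Pi.single i 1 : V3)) (Pi.single i 1) 0 := by
    have := ((hasDerivAt_id (0 : ℝ)).smul_const (Pi.single i 1 : V3)).const_add z
    simpa using this
  have hP := (hz.prodMk (hs.div_const C)).const_sub p
  have h1 : HasFDerivAt g (fderiv ℝ g (p - (z, sreg δ z / C))) (p - (z, sreg δ z / C)) :=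
    (hg.differentiable (by norm_num) _).hasFDerivAt
  have h2 := h1.comp_hasDerivAt_of_eq (0 : ℝ) hP (by simp)
  convert! h2 using 1
  have : -((Pi.single i 1 : V3), z i / sreg δ z / C) =
      -((Pi.single i 1 : V3), (0 : ℝ)) - (z i / (sreg δ z * C)) • ((0 : V3), (1 : ℝ)) := by
    ext <;> simp [div_div]
  rw [this, map_sub, map_smul, map_neg, smul_eq_mul]

lemma integral_lineDeriv_zero {f f' : V3 → ℝ} {v : V3} (hf : ContDiff ℝ 1 f)
    (hc : HasCompactSupport f) (h : ∀ z, HasLineDerivAt ℝ f (f' z) z v) :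
    Integrable f' ∧ ∫ z, f' z = 0 := by
  have e : f' = fun z => fderiv ℝ f z v := by
    ext z
    exact ((hf.differentiable (by norm_num) z).hasFDerivAt.hasLineDerivAt v).unique (h z) |>.symm
  have hi : Integrable f' := by
    rw [e]
    refine Continuous.integrable_of_hasCompactSupport ?_ ?_
    · exact (hf.continuous_fderiv (by norm_num)).clm_apply continuous_const
    · exact hc.fderiv_apply (𝕜 := ℝ) v
  refine ⟨hi, ?_⟩
  have := integral_mul_fderiv_eq_neg_fderiv_mul_of_integrable (μ := (volume : Measure V3))
    (f := fun _ : V3 => (1 : ℝ)) (g := f) (v := v) (by simp) (by simpa [← e] using hi)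
    (by simpa using hf.continuous.integrable_of_hasCompactSupport hc)
    (fun x _ => by fun_prop) (fun x _ => hf.differentiable (by norm_num) x)
  rw [e]
  simpa using this

lemma contDiff_sreg {δ : ℝ} (hδ : 0 < δ) : ContDiff ℝ 1 (sreg δ) := by
  unfold sreg
  refine ContDiff.sqrt ?_ fun z => ?_
  · unfold dot3; fun_prop
  · have := dot3_self_nonneg z
    positivity

lemma compactSupport_ret (C : ℝ) {K : Set V3} (hK : IsCompact K) {g : V3 × ℝ → ℝ}
    (hs : ∀ y t, y ∉ K → g (y, t) = 0) (p : V3 × ℝ) (δ : ℝ) :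
    HasCompactSupport fun z : V3 => g (p - (z, sreg δ z / C)) := by
  refine HasCompactSupport.intro (hK.image (f := fun y => p.1 - y) (by fun_prop)) fun z hz => ?_
  refine hs _ _ fun hm => hz ⟨_, hm, ?_⟩
  simp

lemma integrable_ret {δ : ℝ} (C : ℝ) {K : Set V3} (hK : IsCompact K)
    {g : V3 × ℝ → ℝ} (hg : Continuous g)
    (hs : ∀ y t, y ∉ K → g (y, t) = 0) (p : V3 × ℝ) {k : V3 → ℝ} (hk : Continuous k) :
    Integrable fun z : V3 => k z * g (p - (z, sreg δ z / C)) :=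
  (hk.mul (integrand_cont C hg δ p)).integrable_of_hasCompactSupport
    (compactSupport_ret C hK hs p δ).mul_left

/-- directional derivative -/
def Dv (v : V3 × ℝ) (g : V3 × ℝ → ℝ) (q : V3 × ℝ) : ℝ := fderiv ℝ g q v

lemma Dv_contDiff {g : V3 × ℝ → ℝ} (hg : ContDiff ℝ (⊤ : ℕ∞) g) (v : V3 × ℝ) :
    ContDiff ℝ (⊤ : ℕ∞) (Dv v g) :=
  (hg.fderiv_right (m := ((⊤ : ℕ∞) : WithTop ℕ∞)) (by simp)).clm_apply contDiff_const

lemma Dv_supp {K : Set V3} (hK : IsCompact K) {g : V3 × ℝ → ℝ}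
    (hs : ∀ y t, y ∉ K → g (y, t) = 0) (v : V3 × ℝ) : ∀ y t, y ∉ K → Dv v g (y, t) = 0 := by
  intro y t hy
  simp [Dv, fderiv_supp hK hs y t hy]

lemma Dv_comm {g : V3 × ℝ → ℝ} (hg : ContDiff ℝ (⊤ : ℕ∞) g) (v w : V3 × ℝ) (q : V3 × ℝ) :
    Dv v (Dv w g) q = Dv w (Dv v g) q := by
  have hd : DifferentiableAt ℝ (fderiv ℝ g) q :=
    ((hg.fderiv_right (m := ((⊤ : ℕ∞) : WithTop ℕ∞)) (by simp)).differentiable (by simp)) q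
  have e : ∀ v w, Dv v (Dv w g) q = fderiv ℝ (fderiv ℝ g) q v w := by
    intro v w
    unfold Dv
    rw [fderiv_clm_apply hd (by fun_prop)]
    simp
  rw [e, e]
  have : IsSymmSndFDerivAt ℝ g q :=
    (hg.contDiffAt).isSymmSndFDerivAt (by
      simp only [minSmoothness_of_isRCLikeNormedField]
      exact WithTop.coe_le_coe.2 (show (2 : ℕ∞) ≤ ⊤ from le_top))
  exact this v w

/-- spatial unit vectors in space-time -/
def eS (i : Fin 3) : V3 × ℝ := (Pi.single i 1, 0)
/-- time unit vector in space-time -/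
def eT : V3 × ℝ := (0, 1)

lemma integral_lin4 {a b c d : V3 → ℝ} (ha : Integrable a) (hb : Integrable b)
    (hc : Integrable c) (hd : Integrable d) (k l : ℝ) :
    -(∫ z, a z) + k * (∫ z, b z) - l * (∫ z, c z) - (∫ z, d z) =
      ∫ z, (-a z + k * b z - l * c z - d z) := by
  have h1 : Integrable fun z => -a z := ha.neg
  have h2 : Integrable fun z => k * b z := hb.const_mul k
  have h3 : Integrable fun z => l * c z := hc.const_mul l
  have h4 : Integrable fun z => -a z + k * b z := h1.add h2
  have h5 : Integrable fun z => -a z + k * b z - l * c z := h4.sub h3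
  rw [integral_sub h5 hd, integral_sub h4 h3, integral_add h1 h2, integral_neg,
    integral_const_mul, integral_const_mul]

lemma reg_identity (C : ℝ) (hC : 0 < C) {K : Set V3} (hK : IsCompact K) {ρ : V3 × ℝ → ℝ}
    (hρ : ContDiff ℝ (⊤ : ℕ∞) ρ) (hs : ∀ y t, y ∉ K → ρ (y, t) = 0) (p : V3 × ℝ)
    {δ : ℝ} (hδ : 0 < δ) :
    -(∫ z : V3, (sreg δ z)⁻¹ * (∑ i, Dv (eS i) (Dv (eS i) ρ) (p - (z, sreg δ z / C))))
    + (C ^ 2)⁻¹ * (∫ z : V3, (dot3 z z / sreg δ z ^ 3) * Dv eT (Dv eT ρ) (p - (z, sreg δ z / C)))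
    - 3 / C * (∫ z : V3, (δ ^ 2 / sreg δ z ^ 4) * Dv eT ρ (p - (z, sreg δ z / C)))
    - (∫ z : V3, (3 * δ ^ 2 / sreg δ z ^ 5) * ρ (p - (z, sreg δ z / C))) = 0 := by
  have hsc := contDiff_sreg hδ
  have hsp := sreg_pos hδ
  have hle : (1 : WithTop ℕ∞) ≤ ((⊤ : ℕ∞) : WithTop ℕ∞) := by exact_mod_cast le_top
  have hcomp : ∀ g : V3 × ℝ → ℝ, ContDiff ℝ (⊤ : ℕ∞) g →
      ContDiff ℝ 1 fun z : V3 => g (p - (z, sreg δ z / C)) := fun g hg =>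
    (hg.of_le hle).comp (contDiff_const.sub (contDiff_id.prodMk (hsc.div_const C)))
  have hT := Dv_contDiff hρ eT
  have hSi := fun i => Dv_contDiff hρ (eS i)
  -- the vector field
  let f : Fin 3 → V3 → ℝ := fun i z =>
    (sreg δ z)⁻¹ * Dv (eS i) ρ (p - (z, sreg δ z / C))
    - C⁻¹ * (z i * (sreg δ z ^ 2)⁻¹) * Dv eT ρ (p - (z, sreg δ z / C))
    - (z i * (sreg δ z ^ 3)⁻¹) * ρ (p - (z, sreg δ z / C))
  let f' : Fin 3 → V3 → ℝ := fun i z =>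
    (-(z i) / sreg δ z ^ 3) * Dv (eS i) ρ (p - (z, sreg δ z / C))
    + (sreg δ z)⁻¹ * (-Dv (eS i) (Dv (eS i) ρ) (p - (z, sreg δ z / C))
        - z i / (sreg δ z * C) * Dv (eS i) (Dv eT ρ) (p - (z, sreg δ z / C)))
    - C⁻¹ * (((sreg δ z ^ 2)⁻¹ - 2 * z i * z i / sreg δ z ^ 4)
        * Dv eT ρ (p - (z, sreg δ z / C))
      + z i * (sreg δ z ^ 2)⁻¹ * (-Dv (eS i) (Dv eT ρ) (p - (z, sreg δ z / C))
        - z i / (sreg δ z * C) * Dv eT (Dv eT ρ) (p - (z, sreg δ z / C))))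
    - (((sreg δ z ^ 3)⁻¹ - 3 * z i * z i / sreg δ z ^ 5) * ρ (p - (z, sreg δ z / C))
      + z i * (sreg δ z ^ 3)⁻¹ * (-Dv (eS i) ρ (p - (z, sreg δ z / C))
        - z i / (sreg δ z * C) * Dv eT ρ (p - (z, sreg δ z / C))))
  have hline : ∀ i z, HasLineDerivAt ℝ (f i) (f' i z) z (Pi.single i 1) := by
    intro i z
    have h0 := hasLineDerivAt_sreg hδ z i
    have h1 := hasLineDerivAt_ret hδ C ((hSi i).of_le hle) p z i
    have h2 := hasLineDerivAt_ret hδ C (hT.of_le hle) p z i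
    have h3 := hasLineDerivAt_ret hδ C (hρ.of_le hle) p z i
    have hz : HasDerivAt (fun t : ℝ => (z + t • (Pi.single i 1 : V3)) i) 1 0 := by
      have := (hasDerivAt_id (0 : ℝ)).const_add (z i)
      simpa using this
    unfold HasLineDerivAt at *
    have hne : sreg δ (z + (0 : ℝ) • (Pi.single i 1 : V3)) ≠ 0 := (hsp _).ne'
    have A := (h0.inv hne).mul h1
    have B := ((hz.mul ((h0.pow 2).inv (pow_ne_zero 2 hne))).const_mul C⁻¹).mul h2
    have D := (hz.mul ((h0.pow 3).inv (pow_ne_zero 3 hne))).mul h3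
    have E := (A.sub B).sub D
    convert! E using 1
    have hcm : fderiv ℝ (Dv (eS i) ρ) (p - (z, sreg δ z / C)) (0, 1) =
      Dv (eS i) (Dv eT ρ) (p - (z, sreg δ z / C)) := Dv_comm hρ eT (eS i) _
    simp only [f', zero_smul, add_zero, Pi.pow_apply, Pi.inv_apply, Pi.mul_apply, hcm]
    change _ = _ + _ * (-Dv (eS i) (Dv (eS i) ρ) _ - _) - (_ + _ * (-Dv (eS i) (Dv eT ρ) _
      - _ * Dv eT (Dv eT ρ) _)) - (_ + _ * (-Dv (eS i) ρ _ - _ * Dv eT ρ _))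
    have := hsp z
    push_cast
    field_simp
    ring
  have hfc : ∀ i, ContDiff ℝ 1 (f i) := by
    intro i
    have h1 := hcomp _ (hSi i)
    have h2 := hcomp _ hT
    have h3 := hcomp _ hρ
    have hi1 : ContDiff ℝ 1 fun z => (sreg δ z)⁻¹ := hsc.inv fun z => (hsp z).ne'
    have hi2 : ContDiff ℝ 1 fun z => (sreg δ z ^ 2)⁻¹ :=
      (hsc.pow 2).inv fun z => pow_ne_zero 2 (hsp z).ne'
    have hi3 : ContDiff ℝ 1 fun z => (sreg δ z ^ 3)⁻¹ :=
      (hsc.pow 3).inv fun z => pow_ne_zero 3 (hsp z).ne'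
    have hz : ContDiff ℝ 1 fun z : V3 => z i := contDiff_apply ℝ ℝ i
    exact ((hi1.mul h1).sub ((contDiff_const.mul (hz.mul hi2)).mul h2)).sub ((hz.mul hi3).mul h3)
  have hcs : ∀ i, HasCompactSupport (f i) := by
    intro i
    have h1 := compactSupport_ret C hK (Dv_supp hK hs (eS i)) p δ
    have h2 := compactSupport_ret C hK (Dv_supp hK hs eT) p δ
    have h3 := compactSupport_ret C hK hs p δ
    refine HasCompactSupport.intro (hK.image (f := fun y => p.1 - y) (by fun_prop)) fun z hz => ?_
    have hn : (p - (z, sreg δ z / C)).1 ∉ K := fun hm => hz ⟨_, hm, by simp⟩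
    have e1 : Dv (eS i) ρ (p - (z, sreg δ z / C)) = 0 := Dv_supp hK hs (eS i) _ _ hn
    have e2 : Dv eT ρ (p - (z, sreg δ z / C)) = 0 := Dv_supp hK hs eT _ _ hn
    have e3 : ρ (p - (z, sreg δ z / C)) = 0 := hs _ _ hn
    simp only [f, e1, e2, e3]; ring
  have hI := fun i => integral_lineDeriv_zero (hfc i) (hcs i) (hline i)
  have hsum : ∫ z, ∑ i, f' i z = 0 := by
    rw [integral_finsetSum _ fun i _ => (hI i).1]
    simp [(hI _).2]
  have hcs' := continuous_sreg δ
  have hdc := continuous_dot3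
  have k1 : Continuous fun z => (sreg δ z)⁻¹ := hcs'.inv₀ fun z => (hsp z).ne'
  have k2 : Continuous fun z => dot3 z z / sreg δ z ^ 3 :=
    hdc.div (hcs'.pow 3) fun z => pow_ne_zero 3 (hsp z).ne'
  have k3 : Continuous fun z => δ ^ 2 / sreg δ z ^ 4 :=
    continuous_const.div (hcs'.pow 4) fun z => pow_ne_zero 4 (hsp z).ne'
  have k4 : Continuous fun z => 3 * δ ^ 2 / sreg δ z ^ 5 :=
    continuous_const.div (hcs'.pow 5) fun z => pow_ne_zero 5 (hsp z).ne'
  have hL : Continuous fun q => ∑ i, Dv (eS i) (Dv (eS i) ρ) q :=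
    continuous_finsetSum _ fun i _ => (Dv_contDiff (hSi i) (eS i)).continuous
  have hLs : ∀ y t, y ∉ K → ∑ i, Dv (eS i) (Dv (eS i) ρ) (y, t) = 0 := fun y t hy =>
    Finset.sum_eq_zero fun i _ => Dv_supp hK (Dv_supp hK hs _) _ y t hy
  have I1 := integrable_ret (δ := δ) C hK hL hLs p k1
  have I2 := integrable_ret (δ := δ) C hK (Dv_contDiff hT eT).continuous
    (Dv_supp hK (Dv_supp hK hs eT) eT) p k2
  have I3 := integrable_ret (δ := δ) C hK hT.continuous (Dv_supp hK hs eT) p k3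
  have I4 := integrable_ret (δ := δ) C hK hρ.continuous hs p k4
  rw [← hsum, integral_lin4 I1 I2 I3 I4]
  congr 1
  ext z
  have hsz := hsp z
  have hq : δ ^ 2 = sreg δ z ^ 2 - (z 0 * z 0 + z 1 * z 1 + z 2 * z 2) := by
    rw [sreg_sq, dot3, Fin.sum_univ_three]; ring
  simp only [f', Fin.sum_univ_three, dot3, hq]
  generalize sreg δ z = s at *
  field_simp
  ring

open Filter Topology in
lemma wave_identity (C : ℝ) (hC : 0 < C) {K : Set V3} (hK : IsCompact K) {ρ : V3 × ℝ → ℝ}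
    (hρ : ContDiff ℝ (⊤ : ℕ∞) ρ) (hs : ∀ y t, y ∉ K → ρ (y, t) = 0) (p : V3 × ℝ) :
    Wop C (fun q => ∑ i, Dv (eS i) (Dv (eS i) ρ) q) p - (C ^ 2)⁻¹ * Wop C (Dv eT (Dv eT ρ)) p
      = - (4 * π * ρ p) := by
  have hT := Dv_contDiff hρ eT
  have hSi := fun i => Dv_contDiff hρ (eS i)
  have hL : Continuous fun q => ∑ i, Dv (eS i) (Dv (eS i) ρ) q :=
    continuous_finsetSum _ fun i _ => (Dv_contDiff (hSi i) (eS i)).continuous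
  have hLs : ∀ y t, y ∉ K → ∑ i, Dv (eS i) (Dv (eS i) ρ) (y, t) = 0 := fun y t hy =>
    Finset.sum_eq_zero fun i _ => Dv_supp hK (Dv_supp hK hs _) _ y t hy
  have hms := fun δ => (continuous_sreg δ).measurable
  have T1 := tendsto_kernel C hK hL hLs p (m := 1) (by norm_num)
    (fun δ z => (sreg δ z)⁻¹) (fun z => (norm3 z)⁻¹)
    (fun δ => (hms δ).inv)
    (fun δ hδ z hz => by
      rw [abs_of_pos (inv_pos.2 (sreg_pos hδ z)), pow_one]
      exact inv_anti₀ (norm_pos_iff.2 hz) (norm_le_sreg δ z))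
    (fun z hz => (tendsto_sreg z).inv₀ (norm3_pos hz).ne')
  have T2 := tendsto_kernel C hK (Dv_contDiff hT eT).continuous
    (Dv_supp hK (Dv_supp hK hs eT) eT) p (m := 1) (by norm_num)
    (fun δ z => dot3 z z / sreg δ z ^ 3) (fun z => (norm3 z)⁻¹)
    (fun δ => continuous_dot3.measurable.div ((hms δ).pow_const 3))
    (fun δ hδ z hz => by
      have h1 := sreg_pos hδ z
      have h2 := dot3_self_nonneg z
      rw [abs_of_nonneg (by positivity), pow_one]
      refine le_trans ?_ (inv_anti₀ (norm_pos_iff.2 hz) (norm_le_sreg δ z))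
      rw [div_le_iff₀ (by positivity)]
      have h3 := sreg_sq δ z
      have : (sreg δ z)⁻¹ * sreg δ z ^ 3 = sreg δ z ^ 2 := by field_simp
      rw [this, h3]
      nlinarith [sq_nonneg δ])
    (fun z hz => by
      have h1 := norm3_pos hz
      have h2 : (norm3 z)⁻¹ = dot3 z z / norm3 z ^ 3 := by
        have : norm3 z ^ 2 = dot3 z z := Real.sq_sqrt (dot3_self_nonneg z)
        rw [← this]; field_simp
      rw [h2]
      exact tendsto_const_nhds.div ((tendsto_sreg z).pow 3) (by positivity))
  have T3 := tendsto_kernel C hK hT.continuous (Dv_supp hK hs eT) p (m := 2) le_rfl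
    (fun δ z => δ ^ 2 / sreg δ z ^ 4) (fun z => 0)
    (fun δ => measurable_const.div ((hms δ).pow_const 4))
    (fun δ hδ z hz => by
      have h1 := sreg_pos hδ z
      rw [abs_of_nonneg (by positivity)]
      refine le_trans ?_ (inv_anti₀ (pow_pos (norm_pos_iff.2 hz) 2)
        (pow_le_pow_left₀ (norm_nonneg _) (norm_le_sreg δ z) 2))
      rw [div_le_iff₀ (by positivity)]
      have : (sreg δ z ^ 2)⁻¹ * sreg δ z ^ 4 = sreg δ z ^ 2 := by field_simp
      rw [this]
      exact pow_le_pow_left₀ hδ.le (le_sreg z) 2)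
    (fun z hz => by
      have h1 := norm3_pos hz
      have h2 : Tendsto (fun δ : ℝ => δ ^ 2) (𝓝[>] 0) (𝓝 0) := by
        have : Continuous fun δ : ℝ => δ ^ 2 := by fun_prop
        simpa using (this.tendsto 0).mono_left (nhdsWithin_le_nhds (s := Set.Ioi 0))
      have h3 := h2.div ((tendsto_sreg z).pow 4) (by positivity)
      rw [zero_div] at h3
      exact h3)
  have T4 := tendsto_delta C hK hρ.continuous hs p
  have T := ((T1.neg.add (T2.const_mul (C ^ 2)⁻¹)).sub (T3.const_mul (3 / C))).sub T4
  have T0 : Tendsto (fun _ : ℝ => (0 : ℝ)) (𝓝[>] 0) (𝓝 0) := tendsto_const_nhds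
  have hev := T.congr' (f₂ := fun _ => (0 : ℝ)) (by
    filter_upwards [self_mem_nhdsWithin] with δ hδ
    exact reg_identity C hC hK hρ hs p hδ)
  have := tendsto_nhds_unique hev T0
  simp only [zero_mul, integral_zero, mul_zero, sub_zero] at this
  unfold Wop
  simp only [smul_eq_mul]
  linarith

lemma Wop_Dv (C : ℝ) {K : Set V3} (hK : IsCompact K) {ρ : V3 × ℝ → ℝ}
    (hρ : ContDiff ℝ (⊤ : ℕ∞) ρ) (hs : ∀ y t, y ∉ K → ρ (y, t) = 0) (v : V3 × ℝ) :
    Dv v (Wop C ρ) = Wop C (Dv v ρ) := by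
  have h1 : ContDiff ℝ 1 ρ := hρ.of_le (by exact_mod_cast le_top)
  ext p
  unfold Dv
  rw [(Wop_hasFDerivAt C hK h1 hs p).fderiv, Wop_fderiv_apply C hK h1 hs]

lemma pdS_eq {f : V3 × ℝ → ℝ} (hf : Differentiable ℝ f) (i : Fin 3) : pdS i f = Dv (eS i) f := by
  ext p
  unfold pdS Dv eS
  have h0 : HasFDerivAt (fun y : V3 => (y, p.2)) ((ContinuousLinearMap.id ℝ V3).prod 0) p.1 :=
    (hasFDerivAt_id p.1).prodMk (hasFDerivAt_const p.2 p.1)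
  have h := HasFDerivAt.comp (g := f) p.1 (hf p).hasFDerivAt h0
  have h' : fderiv ℝ (fun y => f (y, p.2)) p.1 = _ := h.fderiv
  rw [h']
  simp

lemma pdT_eq {f : V3 × ℝ → ℝ} (hf : Differentiable ℝ f) : pdT f = Dv eT f := by
  ext p
  unfold pdT Dv eT
  have h := (hf p).hasFDerivAt.comp_hasDerivAt p.2
    ((hasDerivAt_const p.2 p.1).prodMk (hasDerivAt_id p.2))
  exact h.deriv

lemma Vret_eq (C ε₀ : ℝ) (ρ : V3 × ℝ → ℝ) :
    Vret C ε₀ ρ = fun p => (1 / (4 * π * ε₀)) * Wop C ρ p := by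
  ext p
  unfold Vret Wop
  congr 1
  rw [← integral_sub_left_eq_self _ volume p.1]
  congr 1
  ext z
  simp only [sub_sub_cancel, sreg_zero, smul_eq_mul]
  rfl

/-- The retarded scalar potential is twice differentiable and satisfies the
inhomogeneous wave equation `ΔV − (1/C²) ∂²V/∂t² = −ρ/ε₀`. -/
theorem retarded_scalar_potential_wave_equation
    (C ε₀ : ℝ) (hC : 0 < C) (hε : 0 < ε₀)
    (ρ : V3 × ℝ → ℝ) (hρ : ContDiff ℝ (⊤ : ℕ∞) ρ)
    (K : Set V3) (hK : IsCompact K)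
    (hsupp : ∀ t : ℝ, (Function.support fun y => ρ (y, t)) ⊆ K) :
    ContDiff ℝ (2 : ℕ∞) (Vret C ε₀ ρ) ∧
    ∀ p : V3 × ℝ,
      lap (Vret C ε₀ ρ) p - (1 / C ^ 2) * pdT (pdT (Vret C ε₀ ρ)) p = -(ρ p / ε₀) := by
  have hs : ∀ y t, y ∉ K → ρ (y, t) = 0 := by
    intro y t hy
    by_contra h
    exact hy (hsupp t h)
  have hV := Vret_eq C ε₀ ρ
  have hW2 : ∀ g : V3 × ℝ → ℝ, ContDiff ℝ (⊤ : ℕ∞) g → (∀ y t, y ∉ K → g (y, t) = 0) →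
      ContDiff ℝ 2 (Wop C g) := fun g hg hgs => Wop_contDiff C hK 2 ℝ g hg hgs
  set c := 1 / (4 * π * ε₀) with hc
  have hVd : ∀ g : V3 × ℝ → ℝ, ContDiff ℝ (⊤ : ℕ∞) g → (∀ y t, y ∉ K → g (y, t) = 0) →
      Differentiable ℝ (fun p => c * Wop C g p) := fun g hg hgs =>
    ((hW2 g hg hgs).differentiable (by norm_num)).const_mul c
  have hD : ∀ g : V3 × ℝ → ℝ, ContDiff ℝ (⊤ : ℕ∞) g → (∀ y t, y ∉ K → g (y, t) = 0) → ∀ v,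
      Dv v (fun p => c * Wop C g p) = fun p => c * Wop C (Dv v g) p := by
    intro g hg hgs v
    rw [← Wop_Dv C hK hg hgs v]
    ext p
    unfold Dv
    rw [fderiv_const_mul ((hW2 g hg hgs).differentiable (by norm_num) p)]
    simp
  refine ⟨?_, fun p => ?_⟩
  · rw [hV]
    exact contDiff_const.mul (hW2 ρ hρ hs)
  · have hS : ∀ i, pdS i (pdS i (Vret C ε₀ ρ)) p =
        c * Wop C (Dv (eS i) (Dv (eS i) ρ)) p := by
      intro i
      rw [hV, pdS_eq (hVd ρ hρ hs), hD ρ hρ hs,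
        pdS_eq (hVd _ (Dv_contDiff hρ _) (Dv_supp hK hs _)),
        hD _ (Dv_contDiff hρ _) (Dv_supp hK hs _)]
    have hT : pdT (pdT (Vret C ε₀ ρ)) p = c * Wop C (Dv eT (Dv eT ρ)) p := by
      rw [hV, pdT_eq (hVd ρ hρ hs), hD ρ hρ hs,
        pdT_eq (hVd _ (Dv_contDiff hρ _) (Dv_supp hK hs _)),
        hD _ (Dv_contDiff hρ _) (Dv_supp hK hs _)]
    have hsum : Wop C (fun q => ∑ i, Dv (eS i) (Dv (eS i) ρ) q) p =
        ∑ i, Wop C (Dv (eS i) (Dv (eS i) ρ)) p := by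
      unfold Wop
      rw [← integral_finsetSum]
      · simp only [Finset.smul_sum]
      · intro i _
        exact integrand_integrable C hK (Dv_contDiff (Dv_contDiff hρ _) _).continuous
          (Dv_supp hK (Dv_supp hK hs _) _) p
    have key := wave_identity C hC hK hρ hs p
    rw [hsum] at key
    unfold lap
    simp only [hS, hT, ← Finset.mul_sum]
    have : c * (∑ i, Wop C (Dv (eS i) (Dv (eS i) ρ)) p) -
        1 / C ^ 2 * (c * Wop C (Dv eT (Dv eT ρ)) p) =
        c * (∑ i, Wop C (Dv (eS i) (Dv (eS i) ρ)) p - (C ^ 2)⁻¹ * Wop C (Dv eT (Dv eT ρ)) p) := by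
      ring
    rw [this, key, hc]
    have := Real.pi_pos
    field_simp
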